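/- Let g ∈ H', f^0 ∈ H, and define the iterates f^{n+1} = T(f^n) where T(f) = S_{W,P}(f + K*(g − Kf)). Then the sequence (f^n) converges in norm: there exists f* ∈ H which is a minimizer of Φ over H such that ‖f^n − f*‖ → 0 as n → ∞. -/

import Mathlib

open scoped RealInnerProductSpace ENNReal

open Filter Topology

/-!
With `J f = ∑ w_γ |f_γ|^{p_γ}` and `L` the Landweber step, `T f` minimizes `x ↦ ‖x - L f‖² + J x`,
which means that `2 (L f - T f)` is a subgradient of `J` at `T f`. Monotonicity of subgradients
makes `T` nonexpansive, with a defect that controls the residuals: along the iteration, the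
subgradients `2 (L fⁿ - fⁿ⁺¹)` converge in norm to the subgradient `2 (L z - z)` at a fixed point
`z`, and `fⁿ - fⁿ⁺¹ → 0`. The fixed points of `T` are the minimizers of the functional, which exist
by weak compactness.

Norm compactness comes from the exponents `p ≤ 2`: near zero the derivative of `w |x|^p` expands
distances, uniformly in `w ≥ c` and `p ∈ [1, 2]`. Outside the finitely many coordinates where
`2 (L z - z)` is large, convergence of the subgradients therefore forces convergence of the
iterates, and the remaining coordinates form a bounded sequence in a finite-dimensional space. So a
subsequence converges in norm. Its limit is a fixed point, hence the distance to it decreases along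
the whole sequence.
-/

section Subgradient

variable {E : Type*} [NormedAddCommGroup E] [InnerProductSpace ℝ E]
  {D : Set E} {φ : E → ℝ} {b c u v y z : E}

/-- `v` is a subgradient at `y` of `φ` on `D`. A function with values in `(-∞, ∞]` is represented
by its restriction to the set `D` where it is finite. -/
def IsSubgradientOn (D : Set E) (φ : E → ℝ) (v y : E) : Prop :=
  y ∈ D ∧ ∀ x ∈ D, φ y + ⟪v, x - y⟫ ≤ φ x

theorem isSubgradientOn_two_smul_sub_of_isMinOn (hφ : ConvexOn ℝ D φ) (hy : y ∈ D)
    (hmin : IsMinOn (fun x => ‖x‖ ^ 2 - 2 * ⟪b, x⟫ + φ x) D y) :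
    IsSubgradientOn D φ ((2 : ℝ) • (b - y)) y := by
  refine ⟨hy, fun x hx => ?_⟩
  have hsegment : ∀ t ∈ Set.Ioc (0 : ℝ) 1,
      φ y + ⟪(2 : ℝ) • (b - y), x - y⟫ - φ x ≤ t * ‖x - y‖ ^ 2 := fun t ⟨ht, ht1⟩ => by
    have hconv := hφ.2 hy hx (sub_nonneg.2 ht1) ht.le (sub_add_cancel 1 t)
    have hle := isMinOn_iff.1 hmin _ (hφ.1 hy hx (sub_nonneg.2 ht1) ht.le (sub_add_cancel 1 t))
    have hseg : (1 - t) • y + t • x = y + t • (x - y) := by module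
    simp only [hseg, norm_add_sq_real, norm_smul, mul_pow, Real.norm_eq_abs, sq_abs,
      inner_add_right, inner_smul_right, smul_eq_mul] at hconv hle
    refine le_of_mul_le_mul_left ?_ ht
    rw [real_inner_smul_left, inner_sub_left]
    linarith
  have hlim : Tendsto (fun t : ℝ => t * ‖x - y‖ ^ 2) (𝓝[>] 0) (𝓝 0) :=
    ((continuous_mul_const _).tendsto' 0 0 (zero_mul _)).mono_left nhdsWithin_le_nhds
  linarith [ge_of_tendsto hlim (mem_of_superset (Ioc_mem_nhdsGT zero_lt_one) hsegment)]

namespace IsSubgradientOn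

theorem inner_sub_nonneg (hy : IsSubgradientOn D φ v y) (hz : IsSubgradientOn D φ u z) :
    0 ≤ ⟪v - u, y - z⟫ := by
  have hyz := hy.2 z hz.1
  have hzy := hz.2 y hy.1
  rw [← neg_sub y z, inner_neg_right] at hyz
  rw [inner_sub_left]
  linarith

theorem norm_sub_sq_add_le (hy : IsSubgradientOn D φ ((2 : ℝ) • (b - y)) y)
    (hz : IsSubgradientOn D φ ((2 : ℝ) • (c - z)) z) :
    ‖y - z‖ ^ 2 + ‖(b - y) - (c - z)‖ ^ 2 ≤ ‖b - c‖ ^ 2 := by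
  have hmono := hy.inner_sub_nonneg hz
  rw [← smul_sub, real_inner_smul_left] at hmono
  have hsum : b - c = (b - y - (c - z)) + (y - z) := by abel
  rw [hsum, norm_add_sq_real]
  linarith

theorem eq_of_hasDerivAt {φ : ℝ → ℝ} {φ' s y : ℝ} (hs : IsSubgradientOn Set.univ φ s y)
    (hφ : HasDerivAt φ φ' y) : s = φ' := by
  have hmin : IsLocalMin (fun x => φ x - s * x) y := Eventually.of_forall fun x => by
    have := hs.2 x trivial
    simp only [RCLike.inner_apply, conj_trivial] at this
    linarith
  have := hmin.hasDerivAt_eq_zero (hφ.sub ((hasDerivAt_id y).const_mul s))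
  linarith

end IsSubgradientOn

end Subgradient

section Power

open Set

variable {p q s t w c B x y z : ℝ}

theorem le_mul_rpow_of_rpow_le_exp_neg_one (hq : 0 < q) (hq1 : q ≤ 1) (hx : 0 ≤ x)
    (hxq : x ^ q ≤ Real.exp (-1)) : x ≤ q * x ^ q := by
  have hexp : q⁻¹ ≤ Real.exp (q⁻¹ - 1) := by
    simpa using Real.add_one_le_exp (q⁻¹ - 1)
  calc x = x ^ q * (x ^ q) ^ (q⁻¹ - 1) := by
        rw [← Real.rpow_mul hx, ← Real.rpow_add' hx (by field_simp; simp)]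
        field_simp
        simp
    _ ≤ x ^ q * Real.exp (-1) ^ (q⁻¹ - 1) := by
        gcongr
        simpa using (one_le_inv₀ hq).2 hq1
    _ = x ^ q * (Real.exp (q⁻¹ - 1))⁻¹ := by
        rw [← Real.exp_mul, neg_one_mul, Real.exp_neg]
    _ ≤ x ^ q * q := by gcongr; exact inv_le_of_inv_le₀ hq hexp
    _ = q * x ^ q := mul_comm _ _

theorem monotoneOn_rpow_sub_self (hq : 0 < q) (hq1 : q ≤ 1) (hB : B ^ q ≤ Real.exp (-1)) :
    MonotoneOn (fun x => x ^ q - x) (Icc 0 B) := by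
  refine monotoneOn_of_hasDerivWithinAt_nonneg (f' := fun x => q * x ^ (q - 1) - 1)
    (convex_Icc 0 B) ((Real.continuous_rpow_const hq.le).sub continuous_id).continuousOn
    (fun x hx => ?_) fun x hx => ?_
  all_goals rw [interior_Icc] at hx
  · exact ((Real.hasDerivAt_rpow_const (Or.inl hx.1.ne')).sub (hasDerivAt_id x)).hasDerivWithinAt
  · have hle := le_mul_rpow_of_rpow_le_exp_neg_one hq hq1 hx.1.le
      ((Real.rpow_le_rpow hx.1.le hx.2.le hq.le).trans hB)
    rwa [Real.rpow_sub_one hx.1.ne', ← mul_div_assoc, sub_nonneg, one_le_div hx.1]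

theorem monotoneOn_abs_rpow_mul_sub_self (hp : 1 < p) (hp2 : p ≤ 2) (hB0 : 0 ≤ B)
    (hB : B ^ (p - 1) ≤ Real.exp (-1)) :
    MonotoneOn (fun x => |x| ^ (p - 2) * x - x) (Icc (-B) B) := by
  have hpos : MonotoneOn (fun x => |x| ^ (p - 2) * x - x) (Icc 0 B) := by
    refine (monotoneOn_rpow_sub_self (sub_pos.2 hp) (by linarith) hB).congr fun x hx => ?_
    dsimp only
    rw [abs_of_nonneg hx.1, ← Real.rpow_add_one' hx.1 (by linarith)]
    ring_nf
  have hneg : MonotoneOn (fun x => |x| ^ (p - 2) * x - x) (Icc (-B) 0) := fun x hx y hy hxy => by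
    have := hpos (a := -y) (b := -x) ⟨by linarith [hy.2], by linarith [hy.1]⟩
      ⟨by linarith [hx.2], by linarith [hx.1]⟩ (by linarith)
    simp only [abs_neg] at this
    linarith
  rw [← Icc_union_Icc_eq_Icc (neg_nonpos.2 hB0) hB0]
  exact hneg.union_right hpos (isGreatest_Icc (neg_nonpos.2 hB0)) (isLeast_Icc hB0)

theorem abs_sub_le_abs_rpow_mul_sub (hp : 1 < p) (hp2 : p ≤ 2)
    (hy : |y| ^ (p - 1) ≤ Real.exp (-1)) (hz : |z| ^ (p - 1) ≤ Real.exp (-1)) :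
    |y - z| ≤ |(|y| ^ (p - 2) * y - |z| ^ (p - 2) * z)| := by
  wlog hzy : z ≤ y generalizing y z
  · rw [abs_sub_comm, abs_sub_comm (_ * _)]
    exact this hz hy (le_of_not_ge hzy)
  have hmax : max |y| |z| ^ (p - 1) ≤ Real.exp (-1) := by
    rcases max_choice |y| |z| with h | h <;> rwa [h]
  have hmono := monotoneOn_abs_rpow_mul_sub_self hp hp2 (le_max_of_le_left (abs_nonneg y)) hmax
    (abs_le.1 (le_max_right _ _)) (abs_le.1 (le_max_left _ _)) hzy
  rw [abs_of_nonneg (sub_nonneg.2 hzy)]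
  exact le_trans (by linarith) (le_abs_self _)

/-- The one-dimensional penalty `w |x|^p`. -/
noncomputable def weightedPower (w p x : ℝ) : ℝ := w * |x| ^ p

theorem weightedPower_nonneg (hw : 0 ≤ w) (p x : ℝ) : 0 ≤ weightedPower w p x :=
  mul_nonneg hw (Real.rpow_nonneg (abs_nonneg x) p)

theorem weightedPower_zero (w : ℝ) (hp : p ≠ 0) : weightedPower w p 0 = 0 := by
  simp [weightedPower, Real.zero_rpow hp]

theorem continuous_weightedPower (w : ℝ) (hp : 0 ≤ p) : Continuous (weightedPower w p) :=
  continuous_const.mul (continuous_abs.rpow_const fun _ => Or.inr hp)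

theorem convexOn_weightedPower (hw : 0 ≤ w) (hp : 1 ≤ p) :
    ConvexOn ℝ univ (weightedPower w p) := by
  have himage : (norm : ℝ → ℝ) '' univ = Ici 0 := image_univ.trans (range_norm ℝ)
  refine ConvexOn.smul hw (ConvexOn.comp (g := fun x : ℝ => x ^ p) ?_ convexOn_univ_norm ?_)
  · exact himage ▸ convexOn_rpow hp
  · exact himage ▸ Real.monotoneOn_rpow_Ici_of_exponent_nonneg (by linarith)

namespace IsSubgradientOn

theorem weightedPower_le_abs_mul (hp : p ≠ 0) (hs : IsSubgradientOn univ (weightedPower w p) s y) :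
    weightedPower w p y ≤ |s| * |y| := by
  have h0 := hs.2 0 trivial
  rw [weightedPower_zero w hp, zero_sub, inner_neg_right] at h0
  exact (by linarith : _ ≤ ⟪s, y⟫).trans (real_inner_le_norm s y)

theorem mul_abs_sub_le_of_abs_rpow_le (hcw : c ≤ w) (hc : 0 ≤ c) (hp : 1 ≤ p) (hp2 : p ≤ 2)
    (hs : IsSubgradientOn univ (weightedPower w p) s y)
    (ht : IsSubgradientOn univ (weightedPower w p) t z)
    (hy : |y| ^ p ≤ |y| / 4) (hz : |z| ^ p ≤ |z| / 4) : c * |y - z| ≤ |s - t| := by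
  rcases hp.eq_or_lt with rfl | hp
  · rw [Real.rpow_one] at hy hz
    have hy0 : y = 0 := abs_nonpos_iff.1 (by linarith)
    have hz0 : z = 0 := abs_nonpos_iff.1 (by linarith)
    simp [hy0, hz0]
  have hquarter : (1 / 4 : ℝ) ≤ Real.exp (-1) := by
    rw [Real.exp_neg, one_div]
    exact inv_anti₀ (Real.exp_pos 1) (by linarith [Real.exp_one_lt_d9])
  have hsmall : ∀ x : ℝ, |x| ^ p ≤ |x| / 4 → |x| ^ (p - 1) ≤ Real.exp (-1) := fun x hx => by
    refine le_trans ?_ hquarter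
    rcases eq_or_ne x 0 with rfl | hx0
    · simp [Real.zero_rpow (sub_pos.2 hp).ne']
    · rw [Real.rpow_sub_one (abs_ne_zero.2 hx0), div_le_iff₀ (abs_pos.2 hx0)]
      linarith
  have hderiv : ∀ {r x : ℝ}, IsSubgradientOn univ (weightedPower w p) r x →
      r = w * (p * |x| ^ (p - 2) * x) := fun h =>
    h.eq_of_hasDerivAt ((hasDerivAt_abs_rpow _ hp).const_mul w)
  have hcwp : c ≤ w * p := hcw.trans (le_mul_of_one_le_right (hc.trans hcw) hp.le)
  calc c * |y - z| ≤ w * p * |(|y| ^ (p - 2) * y - |z| ^ (p - 2) * z)| :=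
        mul_le_mul hcwp (abs_sub_le_abs_rpow_mul_sub hp hp2 (hsmall y hy) (hsmall z hz))
          (abs_nonneg _) (hc.trans hcwp)
    _ = |w * p * (|y| ^ (p - 2) * y - |z| ^ (p - 2) * z)| := by
        rw [abs_mul, abs_of_nonneg (hc.trans hcwp)]
    _ = |s - t| := by
        rw [hderiv hs, hderiv ht]
        ring_nf

theorem mul_abs_sub_le (hcw : c ≤ w) (hc : 0 < c) (hp : 1 ≤ p) (hp2 : p ≤ 2)
    (hs : IsSubgradientOn univ (weightedPower w p) s y)
    (ht : IsSubgradientOn univ (weightedPower w p) t z)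
    (htc : |t| ≤ c / 8) (hB : 1 ≤ B) (hyz : |y - z| ≤ B) :
    c * |y - z| ≤ 8 * B * |s - t| := by
  have hp0 : p ≠ 0 := by positivity
  have hpow : ∀ {r x : ℝ}, IsSubgradientOn univ (weightedPower w p) r x →
      c * |x| ^ p ≤ |r| * |x| := fun h =>
    (mul_le_mul_of_nonneg_right hcw (by positivity)).trans (h.weightedPower_le_abs_mul hp0)
  rcases le_or_gt (|y| ^ p) (|y| / 4) with hy | hy
  · have hz : |z| ^ p ≤ |z| / 4 := by
      refine le_of_mul_le_mul_left ((hpow ht).trans ?_) hc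
      nlinarith [abs_nonneg z]
    have := mul_abs_sub_le_of_abs_rpow_le hcw hc.le hp hp2 hs ht hy hz
    nlinarith [abs_nonneg (s - t)]
  · have hs4 : c / 4 ≤ |s| := by
      have hy0 : 0 < |y| := abs_pos.2 fun h => by simp [h, Real.zero_rpow hp0] at hy
      refine le_of_mul_le_mul_right ((?_ : _ ≤ c * |y| ^ p).trans (hpow hs)) hy0
      nlinarith
    have hst : c / 8 ≤ |s - t| := by linarith [abs_sub_abs_le_abs_sub s t]
    calc c * |y - z| ≤ c * B := by gcongr
      _ = 8 * B * (c / 8) := by ring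
      _ ≤ 8 * B * |s - t| := by gcongr

end IsSubgradientOn

end Power

section Sequences

theorem tendsto_zero_of_le_sub_succ {a u : ℕ → ℝ} (ha : ∀ n, 0 ≤ a n) (hu : ∀ n, 0 ≤ u n)
    (h : ∀ n, a n ≤ u n - u (n + 1)) : Tendsto a atTop (𝓝 0) := by
  have hanti : Antitone u := antitone_nat_of_succ_le fun n => by linarith [ha n, h n]
  have hlim := tendsto_atTop_ciInf hanti ⟨0, Set.forall_mem_range.2 hu⟩
  refine squeeze_zero ha h ?_
  simpa using hlim.sub (hlim.comp (tendsto_add_atTop_nat 1))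

theorem tendsto_zero_of_mul_norm_sq_le {E : Type*} [SeminormedAddCommGroup E] {x : ℕ → E} {C : ℝ}
    {u : ℕ → ℝ} (hC : 0 < C) (hu : Tendsto u atTop (𝓝 0)) (h : ∀ n, C * ‖x n‖ ^ 2 ≤ u n) :
    Tendsto x atTop (𝓝 0) := by
  have hsq := (squeeze_zero (fun n => sq_nonneg ‖x n‖)
    (fun n => (le_inv_mul_iff₀ hC).2 (h n)) (by simpa using hu.const_mul C⁻¹)).sqrt
  rw [tendsto_zero_iff_norm_tendsto_zero]
  simpa using hsq

theorem exists_subseq_tendsto_of_sub_tendsto_zero {E : Type*} [NormedAddCommGroup E]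
    [NormedSpace ℝ E] (U : Submodule ℝ E) [FiniteDimensional ℝ U] {x : ℕ → E} {u : ℕ → U}
    (hx : Bornology.IsBounded (Set.range x)) (hxu : Tendsto (fun n => x n - u n) atTop (𝓝 0)) :
    ∃ y, ∃ ψ : ℕ → ℕ, StrictMono ψ ∧ Tendsto (x ∘ ψ) atTop (𝓝 y) := by
  have hbounded : Bornology.IsBounded (Set.range u) := by
    have := hx.sub (Metric.isBounded_range_of_tendsto _ hxu)
    refine isBounded_iff_forall_norm_le.2 ?_
    obtain ⟨C, hC⟩ := isBounded_iff_forall_norm_le.1 this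
    refine ⟨C, Set.forall_mem_range.2 fun n => ?_⟩
    simpa using hC _ (Set.sub_mem_sub (Set.mem_range_self n) (Set.mem_range_self n))
  obtain ⟨v, -, ψ, hψ, hv⟩ := tendsto_subseq_of_bounded hbounded Set.mem_range_self
  refine ⟨v, ψ, hψ, ?_⟩
  simpa [Function.comp_def] using
    (hxu.comp hψ.tendsto_atTop).add ((continuous_subtype_val.tendsto v).comp hv)

theorem isFixedPt_and_tendsto_of_tendsto_subseq {X : Type*} [MetricSpace X] {T : X → X}
    (hT : LipschitzWith 1 T) {x : ℕ → X} (hx : ∀ n, x (n + 1) = T (x n))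
    (hreg : Tendsto (fun n => dist (x n) (x (n + 1))) atTop (𝓝 0))
    {ψ : ℕ → ℕ} (hψ : Tendsto ψ atTop atTop) {y : X} (hy : Tendsto (x ∘ ψ) atTop (𝓝 y)) :
    Function.IsFixedPt T y ∧ Tendsto x atTop (𝓝 y) := by
  have hfix : Function.IsFixedPt T y := by
    have hlim := hy.dist ((hT.continuous.tendsto y).comp hy)
    simp only [Function.comp_apply, ← hx] at hlim
    exact (dist_eq_zero.1 (tendsto_nhds_unique hlim (hreg.comp hψ))).symm
  have hanti : Antitone fun n => dist (x n) y := antitone_nat_of_succ_le fun n => by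
    simpa [hx, hfix.eq] using hT.dist_le_mul (x n) y
  exact ⟨hfix, tendsto_iff_dist_tendsto_zero.2 <|
    (tendsto_iff_tendsto_subseq_of_antitone hanti hψ).2 (tendsto_iff_dist_tendsto_zero.1 hy)⟩

end Sequences

section ProximalLandweber

open scoped InnerProduct

variable {H H' : Type*} [NormedAddCommGroup H] [InnerProductSpace ℝ H]
  [NormedAddCommGroup H'] [InnerProductSpace ℝ H']
  {K : H →L[ℝ] H'} {g : H'} {J : H → ℝ≥0∞} {T : H → H} {f : ℕ → H} {x y z : H}

/-- The functional `‖K f - g‖² + J f`, with discrepancy `‖K f - g‖²` and penalty `J`. -/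
noncomputable def penalizedDiscrepancy (K : H →L[ℝ] H') (g : H') (J : H → ℝ≥0∞) (f : H) : ℝ≥0∞ :=
  ENNReal.ofReal (‖K f - g‖ ^ 2) + J f

theorem penalizedDiscrepancy_eq_ofReal (hx : J x ≠ ∞) :
    penalizedDiscrepancy K g J x = ENNReal.ofReal (‖K x - g‖ ^ 2 + (J x).toReal) := by
  rw [ENNReal.ofReal_add (by positivity) (by positivity), ENNReal.ofReal_toReal hx,
    penalizedDiscrepancy]

theorem penalizedDiscrepancy_le_iff (hx : J x ≠ ∞) (hy : J y ≠ ∞) :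
    penalizedDiscrepancy K g J x ≤ penalizedDiscrepancy K g J y ↔
      ‖K x - g‖ ^ 2 + (J x).toReal ≤ ‖K y - g‖ ^ 2 + (J y).toReal := by
  rw [penalizedDiscrepancy_eq_ofReal hx, penalizedDiscrepancy_eq_ofReal hy,
    ENNReal.ofReal_le_ofReal_iff (by positivity)]

variable [CompleteSpace H'] [CompleteSpace H]

/-- The Landweber step, a gradient step of size `1/2` for the discrepancy `‖K f - g‖²`. -/
noncomputable def landweber (K : H →L[ℝ] H') (g : H') (f : H) : H :=
  f + (K†) (g - K f)

/-- Each `T f` satisfies the optimality condition which, for convex `J`, characterizes the minimizer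
of `x ↦ ‖x - landweber K g f‖² + J x`. The subgradient refers to the set where `J` is finite. -/
def IsProximalLandweber (K : H →L[ℝ] H') (g : H') (J : H → ℝ≥0∞) (T : H → H) : Prop :=
  ∀ f, IsSubgradientOn {x | J x ≠ ∞} (fun x => (J x).toReal)
    ((2 : ℝ) • (landweber K g f - T f)) (T f)

theorem norm_apply_sub_sq_eq (K : H →L[ℝ] H') (g : H') (x y : H) :
    ‖K x - g‖ ^ 2 = ‖K y - g‖ ^ 2 - 2 * ⟪(K†) (g - K y), x - y⟫ + ‖K (x - y)‖ ^ 2 := by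
  have hsub : K x - g = K (x - y) - (g - K y) := by rw [map_sub]; abel
  rw [hsub, norm_sub_sq_real, ContinuousLinearMap.adjoint_inner_left, real_inner_comm,
    norm_sub_rev g]
  ring

theorem landweber_sub (K : H →L[ℝ] H') (g : H') (x y : H) :
    landweber K g x - landweber K g y = (x - y) - (K†) (K (x - y)) := by
  simp only [landweber, map_sub]
  abel

theorem norm_landweber_sub_sq_le (K : H →L[ℝ] H') (g : H') (x y : H) :
    ‖landweber K g x - landweber K g y‖ ^ 2 ≤
      ‖x - y‖ ^ 2 - (2 - ‖K‖ ^ 2) * ‖K (x - y)‖ ^ 2 := by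
  have hadj : ‖(K†) (K (x - y))‖ ^ 2 ≤ ‖K‖ ^ 2 * ‖K (x - y)‖ ^ 2 := by
    rw [← mul_pow]
    gcongr
    simpa using (K†).le_opNorm (K (x - y))
  rw [landweber_sub, norm_sub_sq_real, ContinuousLinearMap.adjoint_inner_right,
    real_inner_self_eq_norm_sq]
  linarith

namespace IsProximalLandweber

theorem discrepancy_add_le (hT : IsProximalLandweber K g J T) (y : H) (hx : J x ≠ ∞) :
    ‖K (T y) - g‖ ^ 2 + (J (T y)).toReal + ‖K (x - y)‖ ^ 2 + 2 * ⟪y - T y, x - T y⟫ ≤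
      ‖K x - g‖ ^ 2 + (J x).toReal + ‖K (T y - y)‖ ^ 2 := by
  have hsub := (hT y).2 x hx
  have hsplit : landweber K g y - T y = (y - T y) + (K†) (g - K y) := by
    rw [landweber]; abel
  have hinner : ⟪(K†) (g - K y), x - T y⟫ =
      ⟪(K†) (g - K y), x - y⟫ - ⟪(K†) (g - K y), T y - y⟫ := by
    rw [← inner_sub_right, sub_sub_sub_cancel_right]
  rw [real_inner_smul_left, hsplit, inner_add_left, hinner] at hsub
  linarith [norm_apply_sub_sq_eq K g x y, norm_apply_sub_sq_eq K g (T y) y]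

theorem isFixedPt_iff (hT : IsProximalLandweber K g J T) (hK : ‖K‖ ^ 2 < 2) :
    Function.IsFixedPt T x ↔
      ∀ y, penalizedDiscrepancy K g J x ≤ penalizedDiscrepancy K g J y := by
  refine ⟨fun hfix y => ?_, fun hmin => ?_⟩
  · by_cases hy : J y = ∞
    · simp [penalizedDiscrepancy, hy]
    have hle := hT.discrepancy_add_le x hy
    have hx := (hT x).1
    simp only [hfix.eq, sub_self, inner_zero_left, map_zero, norm_zero] at hle hx
    rw [penalizedDiscrepancy_le_iff hx hy]
    linarith [sq_nonneg ‖K (y - x)‖]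
  · have hTx : J (T x) ≠ ∞ := (hT x).1
    have hx : J x ≠ ∞ := ne_top_of_le_ne_top
      (by rw [penalizedDiscrepancy_eq_ofReal hTx]; exact ENNReal.ofReal_ne_top)
      (le_add_self.trans (hmin (T x)))
    have hle := hT.discrepancy_add_le x hx
    have hK' : ‖K (T x - x)‖ ^ 2 ≤ ‖K‖ ^ 2 * ‖T x - x‖ ^ 2 := by
      rw [← mul_pow]
      gcongr
      exact K.le_opNorm _
    rw [real_inner_self_eq_norm_sq, norm_sub_rev x (T x), sub_self, map_zero, norm_zero] at hle
    have hzero : ‖T x - x‖ ^ 2 ≤ 0 := by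
      have hxTx := (penalizedDiscrepancy_le_iff hx hTx).1 (hmin (T x))
      nlinarith [sq_nonneg ‖T x - x‖]
    rwa [sq_nonpos_iff, norm_eq_zero, sub_eq_zero] at hzero

theorem norm_sub_sq_add_le (hT : IsProximalLandweber K g J T) (x y : H) :
    ‖T x - T y‖ ^ 2 + ‖(landweber K g x - T x) - (landweber K g y - T y)‖ ^ 2 +
      (2 - ‖K‖ ^ 2) * ‖K (x - y)‖ ^ 2 ≤ ‖x - y‖ ^ 2 := by
  linarith [(hT x).norm_sub_sq_add_le (hT y), norm_landweber_sub_sq_le K g x y]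

theorem lipschitzWith_one (hT : IsProximalLandweber K g J T) (hK : ‖K‖ ^ 2 ≤ 2) :
    LipschitzWith 1 T := LipschitzWith.of_dist_le_mul fun x y => by
  rw [NNReal.coe_one, one_mul, dist_eq_norm, dist_eq_norm]
  refine le_of_sq_le_sq ?_ (norm_nonneg _)
  have := mul_nonneg (sub_nonneg.2 hK) (sq_nonneg ‖K (x - y)‖)
  nlinarith [hT.norm_sub_sq_add_le x y,
    sq_nonneg ‖(landweber K g x - T x) - (landweber K g y - T y)‖]

theorem tendsto_sq_defect (hT : IsProximalLandweber K g J T) (hK : ‖K‖ ^ 2 ≤ 2)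
    (hz : Function.IsFixedPt T z) (hf : ∀ n, f (n + 1) = T (f n)) :
    Tendsto (fun n => ‖(landweber K g (f n) - T (f n)) - (landweber K g z - z)‖ ^ 2 +
      (2 - ‖K‖ ^ 2) * ‖K (f n - z)‖ ^ 2) atTop (𝓝 0) := by
  refine tendsto_zero_of_le_sub_succ (u := fun n => ‖f n - z‖ ^ 2) (fun n => ?_)
    (fun n => by positivity) fun n => ?_
  · have := sub_nonneg.2 hK
    positivity
  · have hle := hT.norm_sub_sq_add_le (f n) z
    rw [hz.eq, ← hf] at hle
    rw [← hf]
    linarith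

theorem tendsto_landweber_sub (hT : IsProximalLandweber K g J T) (hK : ‖K‖ ^ 2 ≤ 2)
    (hz : Function.IsFixedPt T z) (hf : ∀ n, f (n + 1) = T (f n)) :
    Tendsto (fun n => landweber K g (f n) - T (f n)) atTop (𝓝 (landweber K g z - z)) := by
  refine tendsto_sub_nhds_zero_iff.1 (tendsto_zero_of_mul_norm_sq_le one_pos
    (hT.tendsto_sq_defect hK hz hf) fun n => ?_)
  linarith [mul_nonneg (sub_nonneg.2 hK) (sq_nonneg ‖K (f n - z)‖)]

theorem tendsto_apply_sub (hT : IsProximalLandweber K g J T) (hK : ‖K‖ ^ 2 < 2)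
    (hz : Function.IsFixedPt T z) (hf : ∀ n, f (n + 1) = T (f n)) :
    Tendsto (fun n => K (f n - z)) atTop (𝓝 0) :=
  tendsto_zero_of_mul_norm_sq_le (sub_pos.2 hK) (hT.tendsto_sq_defect hK.le hz hf) fun _ =>
    le_add_of_nonneg_left (sq_nonneg _)

theorem tendsto_dist_succ (hT : IsProximalLandweber K g J T) (hK : ‖K‖ ^ 2 < 2)
    (hz : Function.IsFixedPt T z) (hf : ∀ n, f (n + 1) = T (f n)) :
    Tendsto (fun n => dist (f n) (f (n + 1))) atTop (𝓝 0) := by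
  have hlim := (tendsto_sub_nhds_zero_iff.2 (hT.tendsto_landweber_sub hK.le hz hf)).add
    (((K†).continuous.tendsto' 0 0 (map_zero _)).comp (hT.tendsto_apply_sub hK hz hf))
  rw [add_zero] at hlim
  refine (tendsto_zero_iff_norm_tendsto_zero.1 hlim).congr fun n => ?_
  rw [dist_eq_norm, hf]
  simp only [landweber, Function.comp_apply, map_sub]
  congr 1
  abel

theorem isBounded_range (hT : IsProximalLandweber K g J T) (hK : ‖K‖ ^ 2 ≤ 2)
    (hz : Function.IsFixedPt T z) (hf : ∀ n, f (n + 1) = T (f n)) :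
    Bornology.IsBounded (Set.range f) := by
  have hanti : Antitone fun n => dist (f n) z := antitone_nat_of_succ_le fun n => by
    simpa [hf, hz.eq] using (hT.lipschitzWith_one hK).dist_le_mul (f n) z
  exact (Metric.isBounded_iff_subset_closedBall z).2
    ⟨dist (f 0) z, Set.range_subset_iff.2 fun n => hanti (Nat.zero_le n)⟩

end IsProximalLandweber

end ProximalLandweber

section HilbertBasis

variable {H Γ : Type*} [NormedAddCommGroup H] [InnerProductSpace ℝ H] (e : HilbertBasis Γ ℝ H)

theorem hasSum_coord_mul_coord (x y : H) : HasSum (fun γ => ⟪x, e γ⟫ * ⟪y, e γ⟫) ⟪x, y⟫ := by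
  simpa only [real_inner_comm] using e.hasSum_inner_mul_inner x y

theorem hasSum_coord_sq (x : H) : HasSum (fun γ => ⟪x, e γ⟫ ^ 2) (‖x‖ ^ 2) := by
  simpa only [sq, real_inner_self_eq_norm_mul_norm] using hasSum_coord_mul_coord e x x

theorem finite_setOf_lt_abs_coord (x : H) {δ : ℝ} (hδ : 0 < δ) :
    {γ | δ < |⟪x, e γ⟫|}.Finite := by
  have hsmall := (hasSum_coord_sq e x).summable.tendsto_cofinite_zero.eventually
    (gt_mem_nhds (pow_pos hδ 2))
  refine (eventually_cofinite.1 hsmall).subset fun γ hγ => not_lt.2 ?_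
  rw [← sq_abs ⟪x, e γ⟫]
  exact pow_le_pow_left₀ hδ.le (le_of_lt hγ) 2

theorem norm_le_mul_norm_of_abs_coord_le {x y : H} {C : ℝ} (hC : 0 ≤ C)
    (h : ∀ γ, |⟪x, e γ⟫| ≤ C * |⟪y, e γ⟫|) : ‖x‖ ≤ C * ‖y‖ := by
  refine le_of_sq_le_sq ?_ (by positivity)
  rw [mul_pow]
  refine hasSum_le (fun γ => ?_) (hasSum_coord_sq e x) ((hasSum_coord_sq e y).mul_left (C ^ 2))
  rw [← sq_abs, ← sq_abs ⟪y, e γ⟫, ← mul_pow]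
  exact pow_le_pow_left₀ (abs_nonneg _) (h γ) 2

theorem norm_sub_sum_coord_smul_le {x y : H} {C : ℝ} (hC : 0 ≤ C) (F : Finset Γ)
    (h : ∀ γ ∉ F, |⟪x, e γ⟫| ≤ C * |⟪y, e γ⟫|) : ‖x - ∑ γ ∈ F, ⟪x, e γ⟫ • e γ‖ ≤ C * ‖y‖ := by
  classical
  refine norm_le_mul_norm_of_abs_coord_le e hC fun γ => ?_
  have hcoord : ⟪∑ i ∈ F, ⟪x, e i⟫ • e i, e γ⟫ = if γ ∈ F then ⟪x, e γ⟫ else 0 := by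
    simp [sum_inner, inner_smul_left, orthonormal_iff_ite.1 e.orthonormal]
  rw [inner_sub_left, hcoord]
  split_ifs with hγ
  · rw [sub_self, abs_zero]
    positivity
  · simpa using h γ hγ

end HilbertBasis

section SeparablePenalty

variable {H Γ : Type*} [NormedAddCommGroup H] [InnerProductSpace ℝ H] {e : HilbertBasis Γ ℝ H}
  {φ : Γ → ℝ → ℝ} {v x y : H}

/-- The penalty `∑ φ_γ(f_γ)` with a separate nonnegative term for each coordinate `f_γ` of `f`.
Negative values of `φ_γ` are truncated to `0`. -/
noncomputable def separablePenalty (e : HilbertBasis Γ ℝ H) (φ : Γ → ℝ → ℝ) (f : H) : ℝ≥0∞ :=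
  ∑' γ, ENNReal.ofReal (φ γ ⟪f, e γ⟫)

/-- Each coordinate of `v` is a subgradient of `φ_γ` at the corresponding coordinate of `y`. -/
def IsCoordSubgradient (e : HilbertBasis Γ ℝ H) (φ : Γ → ℝ → ℝ) (v y : H) : Prop :=
  ∀ γ, IsSubgradientOn Set.univ (φ γ) ⟪v, e γ⟫ ⟪y, e γ⟫

theorem separablePenalty_zero (e : HilbertBasis Γ ℝ H) (hφ : ∀ γ, φ γ 0 = 0) :
    separablePenalty e φ 0 = 0 := by
  simp [separablePenalty, hφ]

theorem hasSum_toReal_separablePenalty (hφ : ∀ γ t, 0 ≤ φ γ t)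
    (hx : separablePenalty e φ x ≠ ∞) :
    HasSum (fun γ => φ γ ⟪x, e γ⟫) (separablePenalty e φ x).toReal := by
  have hsum := ENNReal.hasSum_toReal hx
  rwa [← ENNReal.tsum_toReal_eq fun _ => ENNReal.ofReal_ne_top,
    funext fun γ => ENNReal.toReal_ofReal (hφ γ ⟪x, e γ⟫)] at hsum

theorem isCoordSubgradient_two_smul_sub {b : H} (hφ : ∀ γ, ConvexOn ℝ Set.univ (φ γ))
    (hmin : ∀ γ t, ⟪y, e γ⟫ ^ 2 - 2 * ⟪b, e γ⟫ * ⟪y, e γ⟫ + φ γ ⟪y, e γ⟫ ≤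
      t ^ 2 - 2 * ⟪b, e γ⟫ * t + φ γ t) :
    IsCoordSubgradient e φ ((2 : ℝ) • (b - y)) y := fun γ => by
  rw [real_inner_smul_left, inner_sub_left, ← smul_eq_mul]
  refine isSubgradientOn_two_smul_sub_of_isMinOn (hφ γ) trivial (isMinOn_iff.2 fun t _ => ?_)
  simpa [mul_comm, mul_left_comm, mul_assoc] using hmin γ t

theorem IsCoordSubgradient.isSubgradientOn (h : IsCoordSubgradient e φ v y)
    (hφ : ∀ γ t, 0 ≤ φ γ t) (hfinite : separablePenalty e φ x ≠ ∞) :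
    IsSubgradientOn {x | separablePenalty e φ x ≠ ∞}
      (fun x => (separablePenalty e φ x).toReal) v y := by
  have hcoord : ∀ x γ, φ γ ⟪y, e γ⟫ + ⟪v, e γ⟫ * ⟪x - y, e γ⟫ ≤ φ γ ⟪x, e γ⟫ := fun x γ => by
    simpa [inner_sub_left, mul_comm] using (h γ).2 ⟪x, e γ⟫ trivial
  have hinner : ∀ x, HasSum (fun γ => ⟪v, e γ⟫ * ⟪x - y, e γ⟫) ⟪v, x - y⟫ := fun x =>
    hasSum_coord_mul_coord e v (x - y)
  have hy : separablePenalty e φ y ≠ ∞ := Summable.tsum_ofReal_ne_top <|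
    ((hasSum_toReal_separablePenalty hφ hfinite).sub (hinner x)).summable.of_nonneg_of_le
      (fun γ => hφ γ _) fun γ => by linarith [hcoord x γ]
  exact ⟨hy, fun x hx => hasSum_le (hcoord x)
    ((hasSum_toReal_separablePenalty hφ hy).add (hinner x))
    (hasSum_toReal_separablePenalty hφ hx)⟩

end SeparablePenalty

section PowerPenalty

variable {H Γ : Type*} [NormedAddCommGroup H] [InnerProductSpace ℝ H] {e : HilbertBasis Γ ℝ H}
  {w p : Γ → ℝ} {c : ℝ}

theorem sq_le_max_one_mul_rpow {t p m : ℝ} (ht : 0 ≤ t) (hp : 1 ≤ p) (hp2 : p ≤ 2)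
    (hm : t ^ p ≤ m) : t ^ 2 ≤ max 1 m * t ^ p := by
  rcases le_total t 1 with ht1 | ht1
  · calc t ^ 2 = t ^ (2 : ℝ) := (Real.rpow_two t).symm
      _ ≤ t ^ p := Real.rpow_le_rpow_of_exponent_ge' ht ht1 (by linarith) hp2
      _ ≤ max 1 m * t ^ p := le_mul_of_one_le_left (by positivity) (le_max_left _ _)
  · have htp : t ≤ t ^ p := Real.self_le_rpow_of_one_le ht1 hp
    calc t ^ 2 = t * t := sq t
      _ ≤ max 1 m * t ^ p := by
        gcongr
        exact htp.trans (hm.trans (le_max_right _ _))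

theorem isBounded_setOf_separablePenalty_weightedPower_le (hc : 0 < c) (hw : ∀ γ, c ≤ w γ)
    (hp : ∀ γ, 1 ≤ p γ ∧ p γ ≤ 2) {M : ℝ≥0∞} (hM : M ≠ ∞) :
    Bornology.IsBounded {f | separablePenalty e (fun γ => weightedPower (w γ) (p γ)) f ≤ M} := by
  set m := M.toReal
  refine isBounded_iff_forall_norm_le.2 ⟨√(max 1 (m / c) / c * m), fun f hf => ?_⟩
  have hnonneg : ∀ γ t, 0 ≤ weightedPower (w γ) (p γ) t := fun γ t =>
    weightedPower_nonneg (hc.le.trans (hw γ)) (p γ) t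
  have hsum := hasSum_toReal_separablePenalty hnonneg (ne_top_of_le_ne_top hM hf)
  have hm := ENNReal.toReal_mono hM hf
  have hcoord : ∀ γ, ⟪f, e γ⟫ ^ 2 ≤
      max 1 (m / c) / c * weightedPower (w γ) (p γ) ⟪f, e γ⟫ := fun γ => by
    have hpow : c * |⟪f, e γ⟫| ^ p γ ≤ weightedPower (w γ) (p γ) ⟪f, e γ⟫ :=
      mul_le_mul_of_nonneg_right (hw γ) (by positivity)
    have hle := (le_hasSum hsum γ fun i _ => hnonneg i _).trans hm
    calc ⟪f, e γ⟫ ^ 2 = |⟪f, e γ⟫| ^ 2 := (sq_abs _).symm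
      _ ≤ max 1 (m / c) * |⟪f, e γ⟫| ^ p γ :=
        sq_le_max_one_mul_rpow (abs_nonneg _) (hp γ).1 (hp γ).2
          ((le_div_iff₀' hc).2 (hpow.trans hle))
      _ = max 1 (m / c) / c * (c * |⟪f, e γ⟫| ^ p γ) := by field_simp
      _ ≤ _ := by gcongr
  refine Real.le_sqrt_of_sq_le ((hasSum_le hcoord (hasSum_coord_sq e f) (hsum.mul_left _)).trans ?_)
  gcongr

theorem exists_subseq_tendsto_of_isCoordSubgradient_weightedPower (hc : 0 < c)
    (hw : ∀ γ, c ≤ w γ) (hp : ∀ γ, 1 ≤ p γ ∧ p γ ≤ 2) {v y : ℕ → H} {u z : H}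
    (hy : ∀ n, IsCoordSubgradient e (fun γ => weightedPower (w γ) (p γ)) (v n) (y n))
    (hz : IsCoordSubgradient e (fun γ => weightedPower (w γ) (p γ)) u z)
    (hv : Tendsto v atTop (𝓝 u)) (hbounded : Bornology.IsBounded (Set.range y)) :
    ∃ a, ∃ ψ : ℕ → ℕ, StrictMono ψ ∧ Tendsto (y ∘ ψ) atTop (𝓝 a) := by
  obtain ⟨B, hB, hyB⟩ := hbounded.subset_closedBall_lt 1 z
  set F := (finite_setOf_lt_abs_coord e u (show 0 < c / 8 by positivity)).toFinset with hF
  have htail : ∀ n, ‖(y n - z) - ∑ γ ∈ F, ⟪y n - z, e γ⟫ • e γ‖ ≤ 8 * B / c * ‖v n - u‖ :=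
    fun n => norm_sub_sum_coord_smul_le e (by positivity) F fun γ hγ => by
      have hu : |⟪u, e γ⟫| ≤ c / 8 := by simpa [hF] using hγ
      have hyz : |⟪y n, e γ⟫ - ⟪z, e γ⟫| ≤ B := by
        rw [← inner_sub_left]
        refine (abs_real_inner_le_norm _ _).trans ?_
        rw [e.orthonormal.norm_eq_one, mul_one, ← dist_eq_norm]
        exact hyB (Set.mem_range_self n)
      rw [div_mul_eq_mul_div, le_div_iff₀' hc, inner_sub_left, inner_sub_left]
      exact (hy n γ).mul_abs_sub_le (hw γ) hc (hp γ).1 (hp γ).2 (hz γ) hu hB.le hyz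
  have hmem : ∀ n, ∑ γ ∈ F, ⟪y n - z, e γ⟫ • e γ ∈ Submodule.span ℝ (e '' F) := fun n =>
    Submodule.sum_smul_mem _ _ fun γ hγ => Submodule.subset_span (Set.mem_image_of_mem e hγ)
  have : FiniteDimensional ℝ (Submodule.span ℝ (e '' F)) :=
    FiniteDimensional.span_of_finite ℝ (F.finite_toSet.image e)
  obtain ⟨a, ψ, hψ, ha⟩ := exists_subseq_tendsto_of_sub_tendsto_zero
    (Submodule.span ℝ (e '' F)) (x := fun n => y n - z) (u := fun n => ⟨_, hmem n⟩)
    (by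
      refine isBounded_iff_forall_norm_le.2 ⟨B, Set.forall_mem_range.2 fun n => ?_⟩
      rw [← dist_eq_norm]
      exact hyB (Set.mem_range_self n))
    (squeeze_zero_norm htail
      (by simpa using (tendsto_iff_norm_sub_tendsto_zero.1 hv).const_mul (8 * B / c)))
  exact ⟨a + z, ψ, hψ, by simpa [Function.comp_def] using ha.add_const z⟩

end PowerPenalty

section WeakLowerSemicontinuity

open scoped InnerProduct

variable {H H' : Type*} [NormedAddCommGroup H'] [InnerProductSpace ℝ H']
  [NormedAddCommGroup H] [InnerProductSpace ℝ H] [CompleteSpace H]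

/-- Weak lower semicontinuity of `Φ`. The weak topology is that of `WeakDual ℝ H`, through the
Riesz isomorphism, so that closed balls are compact by Banach-Alaoglu. -/
def WeaklyLowerSemicontinuous {β : Type*} [Preorder β] (Φ : H → β) : Prop :=
  LowerSemicontinuous fun ℓ : WeakDual ℝ H =>
    Φ ((InnerProductSpace.toDual ℝ H).symm (WeakDual.toStrongDual ℓ))

theorem weaklyLowerSemicontinuous_comp_inner (v : H) {φ : ℝ → ℝ≥0∞} (hφ : Continuous φ) :
    WeaklyLowerSemicontinuous fun x : H => φ ⟪x, v⟫ := by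
  simp only [WeaklyLowerSemicontinuous, InnerProductSpace.toDual_symm_apply]
  exact (hφ.comp (WeakDual.eval_continuous v)).lowerSemicontinuous

theorem WeaklyLowerSemicontinuous.exists_forall_le {β : Type*} [LinearOrder β] {Φ : H → β}
    (hΦ : WeaklyLowerSemicontinuous Φ) (x₀ : H) (hx₀ : Bornology.IsBounded {x | Φ x ≤ Φ x₀}) :
    ∃ x, ∀ y, Φ x ≤ Φ y := by
  obtain ⟨R, hR⟩ := isBounded_iff_forall_norm_le.1 hx₀
  have hmem : ∀ x : H, Φ x ≤ Φ x₀ →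
      StrongDual.toWeakDual (InnerProductSpace.toDual ℝ H x) ∈
        WeakDual.toStrongDual ⁻¹' Metric.closedBall (0 : StrongDual ℝ H) R := fun x hx => by
    simpa using hR x hx
  obtain ⟨ℓ, -, hℓ⟩ := LowerSemicontinuousOn.exists_isMinOn ⟨_, hmem x₀ le_rfl⟩
    (WeakDual.isCompact_closedBall _ _) (hΦ.lowerSemicontinuousOn _)
  have hmin : ∀ x, Φ x ≤ Φ x₀ →
      Φ ((InnerProductSpace.toDual ℝ H).symm (WeakDual.toStrongDual ℓ)) ≤ Φ x := fun x hx => by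
    simpa using isMinOn_iff.1 hℓ _ (hmem x hx)
  refine ⟨(InnerProductSpace.toDual ℝ H).symm (WeakDual.toStrongDual ℓ), fun y => ?_⟩
  rcases le_total (Φ y) (Φ x₀) with hy | hy
  · exact hmin y hy
  · exact (hmin x₀ le_rfl).trans hy

theorem weaklyLowerSemicontinuous_separablePenalty {Γ : Type*} (e : HilbertBasis Γ ℝ H)
    {φ : Γ → ℝ → ℝ} (hφ : ∀ γ, Continuous (φ γ)) :
    WeaklyLowerSemicontinuous (separablePenalty e φ) :=
  lowerSemicontinuous_tsum fun γ =>
    weaklyLowerSemicontinuous_comp_inner (e γ) (ENNReal.continuous_ofReal.comp (hφ γ))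

theorem ofReal_norm_sq_eq_iSup (z : H') :
    ENNReal.ofReal (‖z‖ ^ 2) = ⨆ y : H', ENNReal.ofReal (2 * ⟪z, y⟫ - ‖y‖ ^ 2) := by
  refine le_antisymm (le_iSup_of_le z ?_) (iSup_le fun y => ENNReal.ofReal_le_ofReal ?_)
  · rw [real_inner_self_eq_norm_sq]
    exact ENNReal.ofReal_le_ofReal (by linarith)
  · linarith [norm_sub_sq_real z y, sq_nonneg ‖z - y‖]

theorem weaklyLowerSemicontinuous_penalizedDiscrepancy [CompleteSpace H'] (K : H →L[ℝ] H')
    (g : H') {J : H → ℝ≥0∞} (hJ : WeaklyLowerSemicontinuous J) :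
    WeaklyLowerSemicontinuous (penalizedDiscrepancy K g J) := by
  refine LowerSemicontinuous.add ?_ hJ
  simp only [ofReal_norm_sq_eq_iSup, inner_sub_left, ← ContinuousLinearMap.adjoint_inner_right K]
  exact lowerSemicontinuous_iSup fun y => weaklyLowerSemicontinuous_comp_inner ((K†) y)
    (φ := fun t => ENNReal.ofReal (2 * (t - ⟪g, y⟫) - ‖y‖ ^ 2))
    (ENNReal.continuous_ofReal.comp (by fun_prop))

theorem exists_forall_penalizedDiscrepancy_weightedPower_le [CompleteSpace H'] {Γ : Type*}
    (e : HilbertBasis Γ ℝ H) (K : H →L[ℝ] H') (g : H') {w p : Γ → ℝ} {c : ℝ} (hc : 0 < c)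
    (hw : ∀ γ, c ≤ w γ) (hp : ∀ γ, 1 ≤ p γ ∧ p γ ≤ 2) :
    ∃ x, ∀ y, penalizedDiscrepancy K g (separablePenalty e fun γ => weightedPower (w γ) (p γ)) x ≤
      penalizedDiscrepancy K g (separablePenalty e fun γ => weightedPower (w γ) (p γ)) y := by
  have hp0 : ∀ γ, 0 < p γ := fun γ => zero_lt_one.trans_le (hp γ).1
  have hzero : penalizedDiscrepancy K g (separablePenalty e fun γ => weightedPower (w γ) (p γ)) 0 ≠
      ∞ := by
    rw [penalizedDiscrepancy, separablePenalty_zero e fun γ => weightedPower_zero _ (hp0 γ).ne',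
      add_zero]
    exact ENNReal.ofReal_ne_top
  have hlsc := weaklyLowerSemicontinuous_separablePenalty e fun γ =>
    continuous_weightedPower (w γ) (hp0 γ).le
  exact (weaklyLowerSemicontinuous_penalizedDiscrepancy K g hlsc).exists_forall_le 0 <|
    (isBounded_setOf_separablePenalty_weightedPower_le (e := e) hc hw hp hzero).subset
      (Set.ofPred_subset_ofPred.2 fun _ hf => le_add_self.trans hf)

end WeakLowerSemicontinuity

theorem stmt_16_general
    {H H' : Type*} [NormedAddCommGroup H] [InnerProductSpace ℝ H] [CompleteSpace H]
    [NormedAddCommGroup H'] [InnerProductSpace ℝ H'] [CompleteSpace H']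
    {Γ : Type*} (e : HilbertBasis Γ ℝ H) (K : H →L[ℝ] H') (hK : ‖K‖ ^ 2 < 2)
    (w : Γ → ℝ) (c : ℝ) (hc : 0 < c) (hw : ∀ γ, c ≤ w γ)
    (p : Γ → ℝ) (hp : ∀ γ, 1 ≤ p γ ∧ p γ ≤ 2) (g : H') (Φ : H → ℝ≥0∞)
    (hΦ : ∀ f, Φ f = ENNReal.ofReal (‖K f - g‖ ^ 2) +
      ∑' γ, ENNReal.ofReal (w γ * |⟪f, e γ⟫| ^ (p γ)))
    (S : Γ → ℝ → ℝ)
    (hS : ∀ (γ : Γ) (b x : ℝ),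
      (S γ b) ^ 2 - 2 * b * S γ b + w γ * |S γ b| ^ (p γ) ≤
        x ^ 2 - 2 * b * x + w γ * |x| ^ (p γ))
    (T : H → H)
    (hT : ∀ (f : H) (γ : Γ),
      ⟪T f, e γ⟫ = S γ ⟪f + (ContinuousLinearMap.adjoint K) (g - K f), e γ⟫)
    (fseq : ℕ → H) (hstep : ∀ n, fseq (n + 1) = T (fseq n)) :
    ∃ fstar : H, (∀ f : H, Φ fstar ≤ Φ f) ∧
      Tendsto (fun n => ‖fseq n - fstar‖) atTop (𝓝 0) := by
  set J := separablePenalty e fun γ => weightedPower (w γ) (p γ)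
  obtain rfl : Φ = penalizedDiscrepancy K g J := funext hΦ
  have hw0 : ∀ γ, 0 ≤ w γ := fun γ => hc.le.trans (hw γ)
  have hJ0 : J 0 = 0 := separablePenalty_zero e fun γ =>
    weightedPower_zero (w γ) (zero_lt_one.trans_le (hp γ).1).ne'
  have hcoord : ∀ f, IsCoordSubgradient e (fun γ => weightedPower (w γ) (p γ))
      ((2 : ℝ) • (landweber K g f - T f)) (T f) := fun f =>
    isCoordSubgradient_two_smul_sub (fun γ => convexOn_weightedPower (hw0 γ) (hp γ).1)
      fun γ t => by
        rw [hT]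
        exact hS γ _ t
  have hprox : IsProximalLandweber K g J T := fun f =>
    (hcoord f).isSubgradientOn (fun γ => weightedPower_nonneg (hw0 γ) (p γ))
      (hJ0.trans_ne ENNReal.zero_ne_top)
  obtain ⟨z, hz⟩ := exists_forall_penalizedDiscrepancy_weightedPower_le e K g hc hw hp
  have hfix := (hprox.isFixedPt_iff hK).2 hz
  obtain ⟨fstar, ψ, hψ, hsubseq⟩ := exists_subseq_tendsto_of_isCoordSubgradient_weightedPower
    hc hw hp (y := fun n => fseq (n + 1)) (fun n => by simpa only [hstep] using hcoord (fseq n))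
    (hfix.eq ▸ hcoord z) ((hprox.tendsto_landweber_sub hK.le hfix hstep).const_smul 2)
    ((hprox.isBounded_range hK.le hfix hstep).subset (Set.range_comp_subset_range _ fseq))
  obtain ⟨hfixstar, hlim⟩ := isFixedPt_and_tendsto_of_tendsto_subseq
    (hprox.lipschitzWith_one hK.le) hstep (hprox.tendsto_dist_succ hK hfix hstep)
    ((tendsto_add_atTop_nat 1).comp hψ.tendsto_atTop) hsubseq
  exact ⟨fstar, (hprox.isFixedPt_iff hK).1 hfixstar, tendsto_iff_norm_sub_tendsto_zero.1 hlim⟩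

/-- Strong convergence theorem: the iterates `f^{n+1} = T(f^n)` converge in norm to a
minimizer `f*` of `Φ`. -/
theorem stmt_16
    {H H' : Type*} [NormedAddCommGroup H] [InnerProductSpace ℝ H] [CompleteSpace H]
    [NormedAddCommGroup H'] [InnerProductSpace ℝ H'] [CompleteSpace H']
    {Γ : Type*} [Countable Γ]
    (e : HilbertBasis Γ ℝ H)
    (K : H →L[ℝ] H') (hK : ‖K‖ < 1)
    (w : Γ → ℝ) (c : ℝ) (hc : 0 < c) (hw : ∀ γ, c ≤ w γ)
    (p : Γ → ℝ) (hp : ∀ γ, 1 ≤ p γ ∧ p γ ≤ 2)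
    (g : H')
    (Φ : H → ℝ≥0∞)
    (hΦ : ∀ f, Φ f = ENNReal.ofReal (‖K f - g‖ ^ 2) +
      ∑' γ, ENNReal.ofReal (w γ * |⟪f, e γ⟫| ^ (p γ)))
    (S : Γ → ℝ → ℝ)
    (hS : ∀ (γ : Γ) (b x : ℝ),
      (S γ b) ^ 2 - 2 * b * S γ b + w γ * |S γ b| ^ (p γ) ≤
        x ^ 2 - 2 * b * x + w γ * |x| ^ (p γ))
    (T : H → H)
    (hT : ∀ (f : H) (γ : Γ),
      ⟪T f, e γ⟫ = S γ ⟪f + (ContinuousLinearMap.adjoint K) (g - K f), e γ⟫)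
    (fseq : ℕ → H)
    (hstep : ∀ n, fseq (n + 1) = T (fseq n)) :
    ∃ fstar : H, (∀ f : H, Φ fstar ≤ Φ f) ∧
      Filter.Tendsto (fun n => ‖fseq n - fstar‖) Filter.atTop (nhds 0) :=
  stmt_16_general e K (by nlinarith [norm_nonneg K]) w c hc hw p hp g Φ hΦ S hS T hT fseq hstep
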